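/- Let s₁ ∈ (0,1), put λ = ω_p(s₁) and s₂′ = H_q(λ). Let J be an open subinterval of (s₁^((q−1)/(p−1)), 1) and let t : J → ℝ be differentiable and such that for every s₂ ∈ J one has 1 ≤ t(s₂) ≤ λ, τ(s₁,s₂,t(s₂)) ∈ (0,1), and (s₁, s₂, t(s₂)) satisfies the defining equation. Then the derivative t′(s₂) > 0 for every s₂ ∈ J with s₂ < s₂′, and t′(s₂) < 0 for every s₂ ∈ J with s₂ > s₂′. -/

import Mathlib

noncomputable section

open Real Set

/-- `H r z = r·z^(r-1) - (r-1)·z^r`. -/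
def H (r z : ℝ) : ℝ := r * z ^ (r - 1) - (r - 1) * z ^ r

/-- `ω` is the inverse of `H r`, mapping `(0,1]` into `[1, r/(r-1))`,
    so that `H r (ω s) = s` for `s ∈ (0,1]`. -/
def IsOmega (r : ℝ) (ω : ℝ → ℝ) : Prop :=
  ∀ s ∈ Set.Ioc (0 : ℝ) 1, ω s ∈ Set.Ico (1 : ℝ) (r / (r - 1)) ∧ H r (ω s) = s

/-- `τ(s₁,s₂,t) = ((p-q)/p)·(t^p - s₁)/(t^(p-q) - s₁/s₂)`. -/
def tau (p q s₁ s₂ t : ℝ) : ℝ :=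
  ((p - q) / p) * ((t ^ p - s₁) / (t ^ (p - q) - s₁ / s₂))

/-- `F(τ)` from the paper, where `ω` plays the role of `ω_q`. -/
def Ffun (p q : ℝ) (ω : ℝ → ℝ) (τ : ℝ) : ℝ :=
  (τ / (1 - ω τ)) * (p - (q * (p - 1) / (q - 1)) * ω τ)
    - q * (p * ω τ ^ (q - 1) - (p - 1) * ω τ ^ q)

/-- `A(s)` from the paper, where `ω` plays the role of `ω_q`. -/
def Afun (q : ℝ) (ω : ℝ → ℝ) (s : ℝ) : ℝ :=
  s * (ω s / ((q - 1) * (ω s - 1)) + ω s ^ q / s)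

/-!
Put `b = s₁/s₂`, `z = ω_q(τ)` and `w = ω_q(s₂)`. The definition of `τ` and the defining equation say
together that, with the weights `t^(p-q) - b` and `b`, the values `z^q, w^q` average to `t^q`, and
the values `h(z), h(w)` of `h(u) = p·u^(q-1) - (p-1)·u^q` combine to the constant `s₁`.

Differentiating both relations in `s₂` and eliminating `z'` shows that `t'` has the sign of
`z^q/(z-1) - w^q/(w-1)`, and `u ↦ u^q/(u-1)` decreases on `(1, q/(q-1))`; so `t' > 0` if `z < w` and
`t' < 0` if `w < z`. If `λ < w` then `t ≤ λ < w`, so the average `t^q` forces `z < w`. If `w < λ`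
then `z ≤ w` is impossible: since `H_p(u) = h(u)·u^(p-q)` is decreasing and `x ↦ x^(-(p-q)/q)` is
convex, Jensen's inequality (via the tangent at `t^q`) would give `H_p(w) ≤ s₁ = H_p(λ)`.
-/

/-- The two-exponent variant `p·z^(q-1) - (p-1)·z^q` of `H`, which is the factor containing `ω_q(τ)`
in the defining equation; `mixedH r r` is `H r`. -/
def mixedH (p q z : ℝ) : ℝ := p * z ^ (q - 1) - (p - 1) * z ^ q

section mixedH

variable {p q z : ℝ}

lemma mixedH_eq_mul (hz : 0 < z) : mixedH p q z = z ^ (q - 1) * (p - (p - 1) * z) := by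
  rw [mixedH, rpow_sub_one hz.ne']
  field_simp

lemma mixedH_mul_rpow (hz : 0 < z) : mixedH p q z * z ^ (p - q) = H p z := by
  rw [mixedH, H, sub_mul, mul_assoc, mul_assoc, ← rpow_add hz, ← rpow_add hz]
  ring_nf

lemma lt_div_of_mixedH_pos (hp : 1 < p) (hz : 0 < z) (h : 0 < mixedH p q z) :
    z < p / (p - 1) := by
  rw [mixedH_eq_mul hz] at h
  have hpos := pos_of_mul_pos_right h (rpow_pos_of_pos hz _).le
  rw [lt_div_iff₀ (by linarith)]
  linarith

lemma mixedH_lt_H (hqp : q < p) (hz : 1 < z) : mixedH p q z < H q z := by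
  have hz0 : 0 < z := by linarith
  have hdiff : H q z - mixedH p q z = (p - q) * z ^ (q - 1) * (z - 1) := by
    rw [H, mixedH, rpow_sub_one hz0.ne']
    field_simp
    ring
  have hpos : 0 < (p - q) * z ^ (q - 1) * (z - 1) :=
    mul_pos (mul_pos (sub_pos.2 hqp) (rpow_pos_of_pos hz0 _)) (sub_pos.2 hz)
  linarith

lemma hasStrictDerivAt_mixedH (hz : 0 < z) :
    HasStrictDerivAt (mixedH p q) (z ^ (q - 2) * (p * (q - 1) - q * (p - 1) * z)) z := by
  have h1 := (Real.hasStrictDerivAt_rpow_const (p := q - 1) (Or.inl hz.ne')).const_mul p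
  have h2 := (Real.hasStrictDerivAt_rpow_const (p := q) (Or.inl hz.ne')).const_mul (p - 1)
  refine (h1.fun_sub h2).congr_deriv ?_
  rw [show q - 1 - 1 = q - 2 by ring, show q - 1 = q - 2 + 1 by ring, rpow_add_one hz.ne']
  ring

end mixedH

section H

variable {r z : ℝ}

lemma H_one (r : ℝ) : H r 1 = 1 := by simp [H]

lemma H_eq_mul (hz : 0 < z) : H r z = z ^ (r - 1) * (r - (r - 1) * z) := mixedH_eq_mul hz

lemma hasStrictDerivAt_H (hz : 0 < z) :
    HasStrictDerivAt (H r) (r * (r - 1) * z ^ (r - 2) * (1 - z)) z :=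
  (hasStrictDerivAt_mixedH hz).congr_deriv (by ring)

lemma deriv_H_neg (hr : 1 < r) (hz : 1 < z) : r * (r - 1) * z ^ (r - 2) * (1 - z) < 0 :=
  mul_neg_of_pos_of_neg
    (mul_pos (mul_pos (by linarith) (by linarith)) (rpow_pos_of_pos (by linarith) _))
    (by linarith)

lemma strictAntiOn_H (hr : 1 < r) : StrictAntiOn (H r) (Ici 1) := by
  have hderiv : ∀ z ∈ Ici (1 : ℝ), HasDerivAt (H r) (r * (r - 1) * z ^ (r - 2) * (1 - z)) z :=
    fun z hz => (hasStrictDerivAt_H (zero_lt_one.trans_le hz)).hasDerivAt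
  refine strictAntiOn_of_deriv_neg (convex_Ici 1) (HasDerivAt.continuousOn hderiv) fun z hz => ?_
  rw [interior_Ici] at hz
  rw [(hderiv z (Ioi_subset_Ici_self hz)).deriv]
  exact deriv_H_neg hr hz

lemma H_lt_one (hr : 1 < r) (hz : 1 < z) : H r z < 1 :=
  H_one r ▸ strictAntiOn_H hr self_mem_Ici hz.le hz

lemma H_pos (hr : 1 < r) (hz : z ∈ Ioo 0 (r / (r - 1))) : 0 < H r z := by
  have hlt := (lt_div_iff₀ (by linarith)).1 hz.2
  rw [H_eq_mul hz.1]
  exact mul_pos (rpow_pos_of_pos hz.1 _) (by linarith)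

end H

namespace IsOmega

variable {r s : ℝ} {ω : ℝ → ℝ}

lemma H_apply (hω : IsOmega r ω) (hs : s ∈ Ioo (0 : ℝ) 1) : H r (ω s) = s :=
  (hω s (Ioo_subset_Ioc_self hs)).2

lemma mem_Ioo (hω : IsOmega r ω) (hs : s ∈ Ioo (0 : ℝ) 1) : ω s ∈ Ioo 1 (r / (r - 1)) := by
  obtain ⟨hone, hlt⟩ := (hω s (Ioo_subset_Ioc_self hs)).1
  refine ⟨lt_of_le_of_ne hone fun h => hs.2.ne ?_, hlt⟩
  rw [← hω.H_apply hs, ← h, H_one]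

lemma apply_H (hr : 1 < r) (hω : IsOmega r ω) {z : ℝ} (hz : z ∈ Ioo 1 (r / (r - 1))) :
    ω (H r z) = z := by
  have hHz : H r z ∈ Ioo (0 : ℝ) 1 :=
    ⟨H_pos hr ⟨by linarith [hz.1], hz.2⟩, H_lt_one hr hz.1⟩
  exact (strictAntiOn_H hr).injOn (hω.mem_Ioo hHz).1.le hz.1.le (hω.H_apply hHz)

lemma hasDerivAt (hr : 1 < r) (hω : IsOmega r ω) (hs : s ∈ Ioo (0 : ℝ) 1) :
    HasDerivAt ω (r * (r - 1) * ω s ^ (r - 2) * (1 - ω s))⁻¹ s := by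
  have hz := hω.mem_Ioo hs
  have hleft : ∀ᶠ z in nhds (ω s), ω (H r z) = z :=
    Filter.eventually_of_mem (Ioo_mem_nhds hz.1 hz.2) fun _ => hω.apply_H hr
  have hderiv := (hasStrictDerivAt_H (by linarith [hz.1])).to_local_left_inverse
    (deriv_H_neg hr hz.1).ne hleft
  rw [hω.H_apply hs] at hderiv
  exact hderiv.hasDerivAt

end IsOmega

section Inequalities

variable {p q z w : ℝ}

-- This is `H q (w / z) < 1` in homogeneous form.
lemma rpow_mul_tangent_lt (hq : 1 < q) (hz : 0 < z) (hzw : z < w) :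
    w ^ (q - 1) * (q * z - (q - 1) * w) < z ^ q := by
  have hw : 0 < w := hz.trans hzw
  have hH : H q (w / z) * z ^ q = w ^ (q - 1) * (q * z - (q - 1) * w) := by
    rw [H_eq_mul (by positivity), div_rpow hw.le hz.le, rpow_sub_one hz.ne']
    field_simp
  rw [← hH]
  exact mul_lt_of_lt_one_left (by positivity) (H_lt_one hq ((one_lt_div hz).2 hzw))

lemma rpow_mul_sub_one_lt (hq : 1 < q) (hz : 0 < z) (hzw : z < w) (hw1 : 1 < w)
    (hw : w < q / (q - 1)) : w ^ q * (z - 1) < z ^ q * (w - 1) := by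
  have hw0 : 0 < w := hz.trans hzw
  have hwq : w * (q - 1) < q := (lt_div_iff₀ (by linarith)).1 hw
  have hlin : w * (z - 1) ≤ (q * z - (q - 1) * w) * (w - 1) := by
    linarith [mul_pos (sub_pos.2 hzw) (sub_pos.2 hwq)]
  calc w ^ q * (z - 1) = w ^ (q - 1) * (w * (z - 1)) := by
        rw [rpow_sub_one hw0.ne']
        field_simp
    _ ≤ w ^ (q - 1) * ((q * z - (q - 1) * w) * (w - 1)) := by gcongr
    _ = w ^ (q - 1) * (q * z - (q - 1) * w) * (w - 1) := by ring
    _ < z ^ q * (w - 1) :=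
        mul_lt_mul_of_pos_right (rpow_mul_tangent_lt hq hz hzw) (by linarith)

lemma sub_mul_rpow_lt (hq : 1 < q) (hqp : q < p) (hz : 1 < z) (hzp : z < p / (p - 1)) :
    (p - q) * z ^ q < q * (p - 1) * z - p * (q - 1) := by
  have hz0 : 0 < z := by linarith
  have hzp' : z * (p - 1) < p := (lt_div_iff₀ (by linarith)).1 hzp
  have hpos : 0 < q * (p - 1) * z - p * (q - 1) := by
    linarith [mul_pos (show 0 < q * (p - 1) by nlinarith) (sub_pos.2 hz)]
  have hlin : (p - q) * z ≤ (q * (p - 1) * z - p * (q - 1)) * (q - (q - 1) * z) := by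
    have hfactor : (q * (p - 1) * z - p * (q - 1)) * (q - (q - 1) * z) - (p - q) * z
        = q * (q - 1) * ((z - 1) * (p - z * (p - 1))) := by ring
    rw [← sub_nonneg, hfactor]
    exact mul_nonneg (by nlinarith) (mul_nonneg (by linarith) (by linarith))
  calc (p - q) * z ^ q = (p - q) * z * z ^ (q - 1) := by
        rw [rpow_sub_one hz0.ne']
        field_simp
    _ ≤ (q * (p - 1) * z - p * (q - 1)) * (q - (q - 1) * z) * z ^ (q - 1) := by gcongr
    _ = (q * (p - 1) * z - p * (q - 1)) * H q z := by
        rw [H_eq_mul hz0]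
        ring
    _ < q * (p - 1) * z - p * (q - 1) := mul_lt_of_lt_one_right hpos (H_lt_one hq hz)

lemma one_add_div_mul_one_sub_rpow_le {q r x : ℝ} (hq : 0 < q) (hr : 0 ≤ r) (hx : 0 < x) :
    1 + r / q * (1 - x ^ q) ≤ (x ^ r)⁻¹ := by
  have hlog : q * log x ≤ x ^ q - 1 := by
    rw [← log_rpow hx]
    exact log_le_sub_one_of_pos (by positivity)
  calc 1 + r / q * (1 - x ^ q) ≤ 1 + r / q * (-(q * log x)) := by
        gcongr
        linarith
    _ = -(log x * r) + 1 := by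
        field_simp
        ring
    _ ≤ exp (-(log x * r)) := add_one_le_exp _
    _ = (x ^ r)⁻¹ := by rw [exp_neg, rpow_def_of_pos hx]

lemma mul_one_add_div_mul_le_mixedH_mul_rpow {m t u : ℝ} (hq : 0 < q) (hqp : q ≤ p) (hm : 0 ≤ m)
    (ht : 0 < t) (hu : 0 < u) (hmu : m ≤ H p u) :
    m * (1 + (p - q) / q * (1 - u ^ q / t ^ q)) ≤ mixedH p q u * t ^ (p - q) := by
  have htangent := one_add_div_mul_one_sub_rpow_le hq (sub_nonneg.2 hqp) (div_pos hu ht)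
  rw [div_rpow hu.le ht.le] at htangent
  calc m * (1 + (p - q) / q * (1 - u ^ q / t ^ q)) ≤ m * ((u / t) ^ (p - q))⁻¹ := by gcongr
    _ ≤ H p u * ((u / t) ^ (p - q))⁻¹ := by gcongr
    _ = mixedH p q u * t ^ (p - q) := by
        rw [← mixedH_mul_rpow (q := q) hu, div_rpow hu.le ht.le]
        field_simp

end Inequalities

/-- The pair of relations equivalent to the definition of `τ` together with the defining equation,
for `b = s₁/s₂`, `c = s₁`, `z = ω_q(τ)` and `w = ω_q(s₂)`. The weights `t^(p-q) - b` and `b` average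
`z^q` and `w^q` to `t^q`, and the same weights combine `mixedH p q z` and `mixedH p q w` to `c`. -/
structure IsBalanced (p q c b t z w : ℝ) : Prop where
  rpow_eq : (t ^ (p - q) - b) * z ^ q + b * w ^ q = t ^ p
  mixedH_eq : (t ^ (p - q) - b) * mixedH p q z + b * mixedH p q w = c

namespace IsBalanced

section Comparison

variable {p q c b t z w : ℝ}

lemma rpow_eq_mul (h : IsBalanced p q c b t z w) (ht : 0 < t) :
    (t ^ (p - q) - b) * z ^ q + b * w ^ q = t ^ (p - q) * t ^ q := by
  rw [h.rpow_eq, ← rpow_add ht, sub_add_cancel]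

lemma left_lt_right_of_lt (h : IsBalanced p q c b t z w) (hq : 0 < q) (hb : b ≤ t ^ (p - q))
    (ht : 0 < t) (hw : 0 ≤ w) (htw : t < w) : z < w := by
  by_contra! hwz
  have hmean : t ^ (p - q) * w ^ q ≤ t ^ (p - q) * t ^ q := by
    calc t ^ (p - q) * w ^ q = (t ^ (p - q) - b) * w ^ q + b * w ^ q := by ring
      _ ≤ (t ^ (p - q) - b) * z ^ q + b * w ^ q := by gcongr
      _ = t ^ (p - q) * t ^ q := h.rpow_eq_mul ht
  exact htw.not_ge <| (rpow_le_rpow_iff hw ht.le hq).1 <|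
    le_of_mul_le_mul_left hmean (rpow_pos_of_pos ht _)

lemma le_of_le_H (h : IsBalanced p q c b t z w) (hq : 0 < q) (hqp : q ≤ p) (hb0 : 0 ≤ b)
    (hb : b ≤ t ^ (p - q)) (ht : 0 < t) (hz : 0 < z) (hw : 0 < w) {m : ℝ} (hm : 0 ≤ m)
    (hmz : m ≤ H p z) (hmw : m ≤ H p w) : m ≤ c := by
  have htq : 0 < t ^ q := by positivity
  have hTz := mul_one_add_div_mul_le_mixedH_mul_rpow hq hqp hm ht hz hmz
  have hTw := mul_one_add_div_mul_le_mixedH_mul_rpow hq hqp hm ht hw hmw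
  have hlinear : (t ^ (p - q) - b) * (z ^ q / t ^ q) + b * (w ^ q / t ^ q) = t ^ (p - q) := by
    rw [← mul_div_assoc, ← mul_div_assoc, ← add_div, h.rpow_eq_mul ht,
      mul_div_cancel_right₀ _ htq.ne']
  refine le_of_mul_le_mul_right ?_ (rpow_pos_of_pos ht (p - q))
  calc m * t ^ (p - q)
      = (t ^ (p - q) - b) * (m * (1 + (p - q) / q * (1 - z ^ q / t ^ q)))
        + b * (m * (1 + (p - q) / q * (1 - w ^ q / t ^ q))) := by
        linear_combination m * ((p - q) / q) * hlinear
    _ ≤ (t ^ (p - q) - b) * (mixedH p q z * t ^ (p - q)) + b * (mixedH p q w * t ^ (p - q)) := by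
        gcongr
    _ = c * t ^ (p - q) := by
        rw [← h.mixedH_eq]
        ring

lemma right_lt_left_of_lt_H (h : IsBalanced p q c b t z w) (hq : 0 < q) (hqp : q ≤ p) (hp : 1 < p)
    (hb0 : 0 ≤ b) (hb : b ≤ t ^ (p - q)) (hc : 0 ≤ c) (ht : 0 < t) (hz : 1 ≤ z) (hw : 1 ≤ w)
    (hcw : c < H p w) : w < z := by
  by_contra! hzw
  have hanti : H p w ≤ H p z := (strictAntiOn_H hp).antitoneOn hz hw hzw
  exact hcw.not_ge <| h.le_of_le_H hq hqp hb0 hb ht (by linarith) (by linarith)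
    (hc.trans hcw.le) hanti le_rfl

lemma left_lt_div (h : IsBalanced p q (b * H q w) b t z w) (hp : 1 < p) (hqp : q < p) (hb0 : 0 < b)
    (hb : b < t ^ (p - q)) (hz : 0 < z) (hw : 1 < w) : z < p / (p - 1) := by
  have hpos : 0 < (t ^ (p - q) - b) * mixedH p q z := by
    linarith [h.mixedH_eq, mul_lt_mul_of_pos_left (mixedH_lt_H hqp hw) hb0]
  exact lt_div_of_mixedH_pos hp hz (pos_of_mul_pos_right hpos (by linarith))

end Comparison

lemma deriv_mul_eq {p q c b' t' z' w' s : ℝ} {b t z w : ℝ → ℝ} (hp : p ≠ 0)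
    (hb : HasDerivAt b b' s) (ht : HasDerivAt t t' s) (hz : HasDerivAt z z' s)
    (hw : HasDerivAt w w' s) (ht0 : 0 < t s) (hz0 : 0 < z s) (hw0 : 0 < w s)
    (h : ∀ᶠ x in nhds s, IsBalanced p q c (b x) (t x) (z x) (w x)) :
    t' * (t s ^ (p - q - 1)
        * (t s ^ q * (q * (p - 1) * z s - p * (q - 1)) - (p - q) * z s ^ q))
      = b s * (q * (q - 1) * w s ^ (q - 2) * w') * (z s - w s)
        + b' * (w s ^ (q - 1) * (q * z s - (q - 1) * w s) - z s ^ q) := by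
  have hweight := (ht.rpow_const (p := p - q) (Or.inl ht0.ne')).fun_sub hb
  have hzq := hz.rpow_const (p := q) (Or.inl hz0.ne')
  have hwq := hw.rpow_const (p := q) (Or.inl hw0.ne')
  have hzH := (hasStrictDerivAt_mixedH (p := p) (q := q) hz0).hasDerivAt.comp s hz
  have hwH := (hasStrictDerivAt_mixedH (p := p) (q := q) hw0).hasDerivAt.comp s hw
  have hrpow := ((hweight.fun_mul hzq).fun_add (hb.fun_mul hwq)).unique
    ((ht.rpow_const (p := p) (Or.inl ht0.ne')).congr_of_eventuallyEq
      (h.mono fun _ hx => hx.rpow_eq))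
  have hmixed := ((hweight.fun_mul hzH).fun_add (hb.fun_mul hwH)).unique
    ((hasDerivAt_const s c).congr_of_eventuallyEq (h.mono fun _ hx => hx.mixedH_eq))
  have htp : t s ^ (p - 1) = t s ^ (p - q - 1) * t s ^ q := by
    rw [← rpow_add ht0]
    ring_nf
  have hsq : ∀ u : ℝ, 0 < u → u ^ (q - 1) = u ^ (q - 2) * u ∧ u ^ q = u ^ (q - 2) * u ^ 2 :=
    fun u hu => ⟨by rw [← rpow_add_one hu.ne']; ring_nf, by
      rw [← rpow_natCast u 2, ← rpow_add hu]; norm_num⟩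
  simp only [Function.comp_apply, mixedH, htp, (hsq _ hz0).1, (hsq _ hz0).2, (hsq _ hw0).1,
    (hsq _ hw0).2] at hrpow hmixed ⊢
  apply mul_left_cancel₀ hp
  -- With these multipliers the terms containing `z'` cancel.
  linear_combination (-(q * (p - 1) * z s - p * (q - 1))) * hrpow - q * z s * hmixed

section Omega

variable {p q s₁ s : ℝ} {ω t z : ℝ → ℝ}

lemma deriv_mul_eq_of_isOmega (hp : p ≠ 0) (hq : 1 < q) (hω : IsOmega q ω) (hs : s ∈ Ioo (0 : ℝ) 1)
    (ht : DifferentiableAt ℝ t s) (hz : DifferentiableAt ℝ z s) (ht0 : 0 < t s) (hz0 : 0 < z s)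
    (h : ∀ᶠ x in nhds s, IsBalanced p q s₁ (s₁ / x) (t x) (z x) (ω x)) :
    deriv t s * (t s ^ (p - q - 1)
        * (t s ^ q * (q * (p - 1) * z s - p * (q - 1)) - (p - q) * z s ^ q)) * (ω s - 1)
      = s₁ / s ^ 2 * (z s ^ q * (ω s - 1) - ω s ^ q * (z s - 1)) := by
  have hw := (hω.mem_Ioo hs).1
  have hw0 : 0 < ω s := by linarith
  have hb : HasDerivAt (fun x => s₁ / x) (-s₁ / s ^ 2) s :=
    ((hasDerivAt_const s s₁).fun_div (hasDerivAt_id s) hs.1.ne').congr_deriv (by simp)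
  have hω' := mul_inv_cancel₀ (deriv_H_neg hq hw).ne
  have hHw := hω.H_apply hs
  have hwq : ω s ^ q = ω s ^ (q - 1) * ω s := by rw [← rpow_add_one hw0.ne', sub_add_cancel]
  have hb' : s₁ / s = s₁ / s ^ 2 * s := by
    have := hs.1.ne'
    field_simp
  rw [deriv_mul_eq hp hb ht.hasDerivAt hz.hasDerivAt (hω.hasDerivAt hq hs) ht0 hz0 hw0 h]
  rw [H_eq_mul hw0] at hHw
  rw [hb', hwq]
  linear_combination s₁ / s ^ 2 * s * (ω s - z s) * hω' - s₁ / s ^ 2 * (ω s - z s) * hHw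

lemma exists_pos_deriv_mul_eq (hq : 1 < q) (hqp : q < p) (hω : IsOmega q ω) (hs₁ : 0 < s₁)
    (hs : s ∈ Ioo (0 : ℝ) 1) (ht : DifferentiableAt ℝ t s) (hz : DifferentiableAt ℝ z s)
    (ht1 : 1 ≤ t s) (hz1 : 1 < z s) (hlt : s₁ / s < t s ^ (p - q))
    (h : ∀ᶠ x in nhds s, IsBalanced p q s₁ (s₁ / x) (t x) (z x) (ω x)) :
    ∃ k > 0, deriv t s * k = z s ^ q * (ω s - 1) - ω s ^ q * (z s - 1) := by
  have hw := (hω.mem_Ioo hs).1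
  have hs0 := hs.1
  have ht0 : 0 < t s := by linarith
  have hbal : IsBalanced p q (s₁ / s * H q (ω s)) (s₁ / s) (t s) (z s) (ω s) := by
    rw [hω.H_apply hs, div_mul_cancel₀ s₁ hs0.ne']
    exact h.self_of_nhds
  have hzp := hbal.left_lt_div (by linarith) hqp (by positivity) hlt (by linarith) hw
  have hzq := sub_mul_rpow_lt hq hqp hz1 hzp
  have hslope : 0 < t s ^ q * (q * (p - 1) * z s - p * (q - 1)) - (p - q) * z s ^ q := by
    have hpos : 0 < (p - q) * z s ^ q := mul_pos (by linarith) (by positivity)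
    have htq := one_le_rpow ht1 (zero_lt_one.trans hq).le
    linarith [le_mul_of_one_le_left (hpos.trans hzq).le htq]
  refine ⟨_, div_pos (mul_pos (mul_pos (rpow_pos_of_pos ht0 (p - q - 1)) hslope) (sub_pos.2 hw))
    (div_pos hs₁ (pow_pos hs0 2)), ?_⟩
  rw [← mul_div_assoc, div_eq_iff (by positivity), ← mul_assoc,
    deriv_mul_eq_of_isOmega (by linarith) hq hω hs ht hz ht0 (by linarith) h, mul_comm]

end Omega

end IsBalanced

/-- `(s₁, s, t)` satisfies the defining equation, with `ω` in the role of `ω_q`, and `t` and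
`τ(s₁, s, t)` lie in the admissible range apart from the upper bound on `t`. -/
structure IsSolution (p q : ℝ) (ω : ℝ → ℝ) (s₁ s t : ℝ) : Prop where
  one_le : 1 ≤ t
  tau_mem : tau p q s₁ s t ∈ Ioo (0 : ℝ) 1
  defining_eq : q * (p * ω (tau p q s₁ s t) ^ (q - 1) - (p - 1) * ω (tau p q s₁ s t) ^ q)
      * (t ^ (p - q) - s₁ / s) = (p - q) * s₁ * (ω s ^ q / s - 1)

namespace IsSolution

section Pointwise

variable {p q s₁ s t : ℝ} {ω : ℝ → ℝ}

lemma div_lt_rpow (h : IsSolution p q ω s₁ s t) (hp : 0 < p) (hqp : q < p) (hs₁ : s₁ < 1) :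
    s₁ / s < t ^ (p - q) := by
  have hnum : 0 < t ^ p - s₁ := by linarith [one_le_rpow h.one_le hp.le]
  have htau := pos_of_mul_pos_right h.tau_mem.1 (div_pos (sub_pos.2 hqp) hp).le
  exact sub_pos.1 ((div_pos_iff_of_pos_left hnum).1 htau)

lemma isBalanced (h : IsSolution p q ω s₁ s t) (hω : IsOmega q ω) (hp : 0 < p) (hq : q ≠ 0)
    (hqp : q < p) (hs₁ : s₁ < 1) (hs : s ∈ Ioo (0 : ℝ) 1) :
    IsBalanced p q s₁ (s₁ / s) t (ω (tau p q s₁ s t)) (ω s) := by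
  have hD : 0 < t ^ (p - q) - s₁ / s := sub_pos.2 (h.div_lt_rpow hp hqp hs₁)
  have hpq : p - q ≠ 0 := (sub_pos.2 hqp).ne'
  have htau : p * tau p q s₁ s t * (t ^ (p - q) - s₁ / s) = (p - q) * (t ^ p - s₁) := by
    rw [tau]
    field_simp
  have hHz := hω.H_apply h.tau_mem
  have hHw := hω.H_apply hs
  have heq := h.defining_eq
  have hscale : s₁ / s * s = s₁ := div_mul_cancel₀ s₁ hs.1.ne'
  have hα : s₁ * (ω s ^ q / s - 1) = s₁ / s * (ω s ^ q) - s₁ := by ring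
  rw [mul_assoc (p - q), hα] at heq
  rw [H] at hHz hHw
  constructor
  · apply mul_left_cancel₀ hpq
    linear_combination htau - heq + p * (t ^ (p - q) - s₁ / s) * hHz
  · rw [mixedH, mixedH]
    apply mul_left_cancel₀ hq
    linear_combination heq + p * (s₁ / s) * hHw + p * hscale

end Pointwise

section Deriv

variable {p q s₁ s : ℝ} {ω t : ℝ → ℝ}

lemma differentiableAt_tau (h : IsSolution p q ω s₁ s (t s)) (hp : 0 < p) (hqp : q < p)
    (hs₁ : s₁ < 1) (hs : s ≠ 0) (ht : DifferentiableAt ℝ t s) :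
    DifferentiableAt ℝ (fun x => tau p q s₁ x (t x)) s := by
  have ht0 : t s ≠ 0 := (zero_lt_one.trans_le h.one_le).ne'
  have hD : t s ^ (p - q) - s₁ / s ≠ 0 := (sub_pos.2 (h.div_lt_rpow hp hqp hs₁)).ne'
  have hinv : DifferentiableAt ℝ (fun x => s₁ / x) s :=
    (differentiableAt_const s₁).fun_div differentiableAt_id hs
  exact (((ht.rpow_const (p := p) (Or.inl ht0)).sub_const s₁).fun_div
    ((ht.rpow_const (p := p - q) (Or.inl ht0)).fun_sub hinv) hD).const_mul ((p - q) / p)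

lemma exists_pos_deriv_mul_eq (hq : 1 < q) (hqp : q < p) (hω : IsOmega q ω)
    (hs₁ : s₁ ∈ Ioo (0 : ℝ) 1) (hs : s ∈ Ioo (0 : ℝ) 1) (ht : DifferentiableAt ℝ t s)
    (h : ∀ᶠ x in nhds s, IsSolution p q ω s₁ x (t x)) :
    ∃ k > 0, deriv t s * k = ω (tau p q s₁ s (t s)) ^ q * (ω s - 1)
      - ω s ^ q * (ω (tau p q s₁ s (t s)) - 1) := by
  have hp : 0 < p := by linarith
  have hsol := h.self_of_nhds
  have hz : DifferentiableAt ℝ (fun x => ω (tau p q s₁ x (t x))) s :=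
    (hω.hasDerivAt hq hsol.tau_mem).differentiableAt.comp s
      (hsol.differentiableAt_tau hp hqp hs₁.2 hs.1.ne' ht)
  have hbal : ∀ᶠ x in nhds s,
      IsBalanced p q s₁ (s₁ / x) (t x) (ω (tau p q s₁ x (t x))) (ω x) := by
    filter_upwards [h, Ioo_mem_nhds hs.1 hs.2] with x hx hxs
    exact hx.isBalanced hω hp (by linarith) hqp hs₁.2 hxs
  exact IsBalanced.exists_pos_deriv_mul_eq hq hqp hω hs₁.1 hs ht hz hsol.one_le
    (hω.mem_Ioo hsol.tau_mem).1 (hsol.div_lt_rpow hp hqp hs₁.2) hbal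

lemma deriv_pos (hq : 1 < q) (hqp : q < p) (hω : IsOmega q ω)
    (hs₁ : s₁ ∈ Ioo (0 : ℝ) 1) (hs : s ∈ Ioo (0 : ℝ) 1) (ht : DifferentiableAt ℝ t s)
    (h : ∀ᶠ x in nhds s, IsSolution p q ω s₁ x (t x)) (htw : t s < ω s) : 0 < deriv t s := by
  have hp : 0 < p := by linarith
  have hq0 : 0 < q := by linarith
  have hsol := h.self_of_nhds
  have ht0 : 0 < t s := by linarith [hsol.one_le]
  have hz := hω.mem_Ioo hsol.tau_mem
  have hw := hω.mem_Ioo hs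
  have hlt := hsol.div_lt_rpow hp hqp hs₁.2
  have hzw := (hsol.isBalanced hω hp hq0.ne' hqp hs₁.2 hs).left_lt_right_of_lt hq0 hlt.le ht0
    (by linarith [hw.1]) htw
  obtain ⟨k, hk, hderiv⟩ := exists_pos_deriv_mul_eq hq hqp hω hs₁ hs ht h
  refine pos_of_mul_pos_left ?_ hk.le
  rw [hderiv]
  exact sub_pos.2 (rpow_mul_sub_one_lt hq (by linarith [hz.1]) hzw hw.1 hw.2)

lemma deriv_neg (hq : 1 < q) (hqp : q < p) (hω : IsOmega q ω)
    (hs₁ : s₁ ∈ Ioo (0 : ℝ) 1) (hs : s ∈ Ioo (0 : ℝ) 1) (ht : DifferentiableAt ℝ t s)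
    (h : ∀ᶠ x in nhds s, IsSolution p q ω s₁ x (t x)) (hs₁w : s₁ < H p (ω s)) :
    deriv t s < 0 := by
  have hp : 0 < p := by linarith
  have hq0 : 0 < q := by linarith
  have hsol := h.self_of_nhds
  have ht0 : 0 < t s := by linarith [hsol.one_le]
  have hz := hω.mem_Ioo hsol.tau_mem
  have hw := hω.mem_Ioo hs
  have hlt := hsol.div_lt_rpow hp hqp hs₁.2
  have hwz := (hsol.isBalanced hω hp hq0.ne' hqp hs₁.2 hs).right_lt_left_of_lt_H hq0 hqp.le
    (hq.trans hqp) (div_pos hs₁.1 hs.1).le hlt.le hs₁.1.le ht0 hz.1.le hw.1.le hs₁w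
  obtain ⟨k, hk, hderiv⟩ := exists_pos_deriv_mul_eq hq hqp hω hs₁ hs ht h
  refine neg_of_mul_neg_left ?_ hk.le
  rw [hderiv]
  exact sub_neg.2 (rpow_mul_sub_one_lt hq (by linarith [hw.1]) hwz hz.1 hz.2)

end Deriv

end IsSolution

theorem stmt_0_general {p q s₁ l : ℝ} (hq : 1 < q) (hqp : q < p) {ω : ℝ → ℝ} (hω : IsOmega q ω)
    (hs₁ : s₁ ∈ Ioo (0 : ℝ) 1) (hl1 : 1 ≤ l) (hl : H p l = s₁) {J : Set ℝ} (hJ : IsOpen J)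
    (hJ01 : J ⊆ Ioo 0 1) {t : ℝ → ℝ} (ht : ∀ s ∈ J, DifferentiableAt ℝ t s)
    (hle : ∀ s ∈ J, t s ≤ l) (hsol : ∀ s ∈ J, IsSolution p q ω s₁ s (t s)) :
    (∀ s ∈ J, s < H q l → 0 < deriv t s) ∧ (∀ s ∈ J, H q l < s → deriv t s < 0) := by
  have hw1 : ∀ s ∈ J, 1 ≤ ω s := fun s hs => (hω.mem_Ioo (hJ01 hs)).1.le
  have hnear : ∀ s ∈ J, ∀ᶠ x in nhds s, IsSolution p q ω s₁ x (t x) :=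
    fun s hs => Filter.eventually_of_mem (hJ.mem_nhds hs) hsol
  refine ⟨fun s hs hsl => ?_, fun s hs hls => ?_⟩
  · rw [← hω.H_apply (hJ01 hs)] at hsl
    have hlw : l < ω s := ((strictAntiOn_H hq).lt_iff_gt (hw1 s hs) hl1).1 hsl
    exact IsSolution.deriv_pos hq hqp hω hs₁ (hJ01 hs) (ht s hs) (hnear s hs)
      ((hle s hs).trans_lt hlw)
  · rw [← hω.H_apply (hJ01 hs)] at hls
    have hwl : ω s < l := ((strictAntiOn_H hq).lt_iff_gt hl1 (hw1 s hs)).1 hls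
    exact IsSolution.deriv_neg hq hqp hω hs₁ (hJ01 hs) (ht s hs) (hnear s hs)
      (hl ▸ strictAntiOn_H (hq.trans hqp) (hw1 s hs) hl1 hwl)

/-- monotonicity of `t(s₁,·)`: increasing before `s₂' = H_q(ω_p(s₁))`,
decreasing after it. -/
theorem stmt_0 (p q : ℝ) (hq : 1 < q) (hqp : q < p)
    (ωp ωq : ℝ → ℝ) (hωp : IsOmega p ωp) (hωq : IsOmega q ωq)
    (s₁ : ℝ) (hs₁ : s₁ ∈ Set.Ioo (0 : ℝ) 1)
    (a b : ℝ) (hJ : Set.Ioo a b ⊆ Set.Ioo (s₁ ^ ((q - 1) / (p - 1))) 1)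
    (t : ℝ → ℝ)
    (hdiff : ∀ s₂ ∈ Set.Ioo a b, DifferentiableAt ℝ t s₂)
    (hrange : ∀ s₂ ∈ Set.Ioo a b, 1 ≤ t s₂ ∧ t s₂ ≤ ωp s₁)
    (htau : ∀ s₂ ∈ Set.Ioo a b, tau p q s₁ s₂ (t s₂) ∈ Set.Ioo (0 : ℝ) 1)
    (heq : ∀ s₂ ∈ Set.Ioo a b,
      q * (p * ωq (tau p q s₁ s₂ (t s₂)) ^ (q - 1)
            - (p - 1) * ωq (tau p q s₁ s₂ (t s₂)) ^ q)
          * (t s₂ ^ (p - q) - s₁ / s₂)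
        = (p - q) * s₁ * (ωq s₂ ^ q / s₂ - 1)) :
    (∀ s₂ ∈ Set.Ioo a b, s₂ < H q (ωp s₁) → 0 < deriv t s₂) ∧
    (∀ s₂ ∈ Set.Ioo a b, H q (ωp s₁) < s₂ → deriv t s₂ < 0) :=
  stmt_0_general hq hqp hωq hs₁ (hωp.mem_Ioo hs₁).1.le (hωp.H_apply hs₁) isOpen_Ioo
    (hJ.trans (Ioo_subset_Ioo_left (rpow_nonneg hs₁.1.le _))) hdiff (fun s hs => (hrange s hs).2)
    fun s hs => ⟨(hrange s hs).1, htau s hs, heq s hs⟩
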